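/- For all coprime integers b, c ≥ 2, the Stoneham number α_{b,c} = ∑_{n≥1} 1/(c^n·b^{c^n}) is transcendental over ℚ. -/

import Mathlib

/-- The Stoneham number `α_{b,c} = ∑_{n≥1} 1/(c^n · b^(c^n))`. -/
noncomputable def stoneham (b c : ℕ) : ℝ :=
  ∑' n : ℕ, 1 / ((c : ℝ) ^ (n + 1) * (b : ℝ) ^ (c ^ (n + 1)))

open Polynomial Filter Topology

noncomputable def SF (c : ℕ) (z : ℂ) : ℂ := ∑' n : ℕ, z ^ (c ^ (n + 1)) / (c : ℂ) ^ (n + 1)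

lemma SF_term_bound (c : ℕ) (hc : 2 ≤ c) (z : ℂ) (hz : ‖z‖ ≤ 1) (n : ℕ) :
    ‖z ^ (c ^ (n + 1)) / (c : ℂ) ^ (n + 1)‖ ≤ (1 / 2 : ℝ) ^ (n + 1) := by
  rw [norm_div, norm_pow, norm_pow, Complex.norm_natCast, one_div, inv_pow, ← one_div]
  have h1 : ‖z‖ ^ (c ^ (n + 1)) ≤ 1 := pow_le_one₀ (norm_nonneg _) hz
  have h2 : (2 : ℝ) ^ (n + 1) ≤ (c : ℝ) ^ (n + 1) := by
    have : (2 : ℝ) ≤ c := by exact_mod_cast hc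
    gcongr
  gcongr

lemma half_summable : Summable (fun n : ℕ => (1 / 2 : ℝ) ^ (n + 1)) :=
  (summable_nat_add_iff 1).2 (summable_geometric_of_lt_one (by norm_num) (by norm_num))

lemma SF_summable (c : ℕ) (hc : 2 ≤ c) (z : ℂ) (hz : ‖z‖ ≤ 1) :
    Summable (fun n : ℕ => z ^ (c ^ (n + 1)) / (c : ℂ) ^ (n + 1)) :=
  Summable.of_norm_bounded half_summable (SF_term_bound c hc z hz)

lemma SF_analytic (c : ℕ) (hc : 2 ≤ c) : AnalyticAt ℂ (SF c) 0 := by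
  have h : DifferentiableOn ℂ (SF c) (Metric.ball 0 1) := by
    apply Complex.differentiableOn_tsum_of_summable_norm half_summable
    · intro i
      fun_prop
    · exact Metric.isOpen_ball
    · intro i w hw
      exact SF_term_bound c hc w (by simpa using (le_of_lt (mem_ball_zero_iff.1 hw))) i
  exact h.analyticAt (Metric.ball_mem_nhds 0 one_pos)

lemma SF_eq (c : ℕ) (hc : 2 ≤ c) (z : ℂ) (hz : ‖z‖ ≤ 1) :
    SF c (z ^ c) = c * SF c z - z ^ c := by
  have hc0 : (c : ℂ) ≠ 0 := by
    have : c ≠ 0 := by omega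
    exact_mod_cast this
  unfold SF
  rw [(SF_summable c hc z hz).tsum_eq_zero_add, mul_add, ← tsum_mul_left]
  simp only [zero_add, pow_one]
  rw [mul_div_cancel₀ _ hc0, add_sub_cancel_left]
  congr 1
  ext n
  rw [← pow_mul, ← pow_succ', pow_succ (c : ℂ) (n + 1)]
  field_simp

lemma SF_trunc (c : ℕ) (hc : 2 ≤ c) (M : ℕ) : ∃ T : ℚ[X], ∀ z : ℂ, ‖z‖ ≤ 1 →
    ‖SF c z - aeval z T‖ ≤ ‖z‖ ^ M := by
  refine ⟨∑ n ∈ Finset.range M, C ((1 : ℚ) / (c : ℚ) ^ (n + 1)) * X ^ (c ^ (n + 1)), fun z hz => ?_⟩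
  have h1 : aeval z (∑ n ∈ Finset.range M, C ((1 : ℚ) / (c : ℚ) ^ (n + 1)) * X ^ (c ^ (n + 1)))
      = ∑ n ∈ Finset.range M, z ^ (c ^ (n + 1)) / (c : ℂ) ^ (n + 1) := by
    simp only [map_sum, map_mul, aeval_C, map_pow, aeval_X]
    refine Finset.sum_congr rfl fun n _ => ?_
    simp
    ring
  rw [h1, SF, ← (SF_summable c hc z hz).sum_add_tsum_nat_add M, add_sub_cancel_left]
  have h2 : HasSum (fun n : ℕ => ‖z‖ ^ M * (1 / 2 : ℝ) ^ (n + 1)) (‖z‖ ^ M * 1) := by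
    apply HasSum.mul_left
    have := hasSum_geometric_two' (1 : ℝ)
    have e : (fun n : ℕ => (1 / 2 : ℝ) ^ (n + 1)) = fun n : ℕ => (1 : ℝ) / 2 / 2 ^ n := by
      ext n
      rw [pow_succ, div_pow, one_pow]; ring
    rw [e]; exact this
  have := tsum_of_norm_bounded h2 (f := fun n => z ^ (c ^ (n + M + 1)) / (c : ℂ) ^ (n + M + 1)) ?_
  · simpa using this
  intro n
  have hM : M ≤ c ^ (n + M + 1) := by
    have := (Nat.lt_pow_self (n := n + M + 1) (show 1 < c by omega))
    omega
  rw [norm_div, norm_pow, norm_pow, Complex.norm_natCast, one_div, inv_pow, ← div_eq_mul_inv]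
  have h1 : ‖z‖ ^ (c ^ (n + M + 1)) ≤ ‖z‖ ^ M := pow_le_pow_of_le_one (norm_nonneg _) hz hM
  have h2 : (2 : ℝ) ^ (n + 1) ≤ (c : ℝ) ^ (n + M + 1) := by
    have : (2 : ℝ) ≤ c := by exact_mod_cast hc
    calc (2 : ℝ) ^ (n + 1) ≤ 2 ^ (n + M + 1) := pow_le_pow_right₀ (by norm_num) (by omega)
      _ ≤ _ := by gcongr
  gcongr

/-- no rational solution -/
lemma no_rat (c : ℕ) (hc : 2 ≤ c) (m : ℕ) (hm : m ≠ 0) (p q : ℂ[X]) (hq : q ≠ 0)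
    (h : q * (expand ℂ c p - (m : ℂ[X]) * X ^ c * expand ℂ c q) = (c : ℂ[X]) * expand ℂ c q * p) :
    False := by
  have hc0 : (c : ℂ) ≠ 0 := by
    have : c ≠ 0 := by omega
    exact_mod_cast this
  have hm0 : (m : ℂ) ≠ 0 := by exact_mod_cast hm
  obtain ⟨u, rfl⟩ : ∃ u, p = u + C (m : ℂ) * X * q := ⟨p - C (m : ℂ) * X * q, by ring⟩
  have h' : q * expand ℂ c u = C (c : ℂ) * (expand ℂ c q * (u + C (m : ℂ) * X * q)) := by
    simp only [map_add, map_mul, expand_C, expand_X] at h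
    have e1 : (m : ℂ[X]) = C (m : ℂ) := by simp
    have e2 : (c : ℂ[X]) = C (c : ℂ) := by simp
    rw [e1, e2] at h
    linear_combination h
  have hqe : expand ℂ c q ≠ 0 := by
    rwa [Ne, expand_eq_zero (by omega)]
  have hXq : (C (m : ℂ) * X * q) ≠ 0 := by
    refine mul_ne_zero (mul_ne_zero ?_ X_ne_zero) hq
    simpa using hm
  have hdX : (C (m : ℂ) * X * q).natDegree = q.natDegree + 1 := by
    rw [mul_assoc, natDegree_C_mul hm0, natDegree_X_mul hq]
  have hu : u ≠ 0 := by
    rintro rfl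
    simp only [map_zero, mul_zero, zero_add] at h'
    have : C (c : ℂ) * (expand ℂ c q * (C (m : ℂ) * X * q)) ≠ 0 :=
      mul_ne_zero (by simpa using hc0) (mul_ne_zero hqe hXq)
    exact this h'.symm
  have hue : expand ℂ c u ≠ 0 := by
    rwa [Ne, expand_eq_zero (by omega)]
  have hs : u + C (m : ℂ) * X * q ≠ 0 := by
    intro h0
    rw [h0] at h'
    simp at h'
    tauto
  have hd := congrArg natDegree h'
  rw [natDegree_mul hq hue, natDegree_C_mul hc0, natDegree_mul hqe hs, natDegree_expand,
    natDegree_expand] at hd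
  rcases lt_trichotomy u.natDegree (q.natDegree + 1) with hlt | heq | hgt
  · rw [natDegree_add_eq_right_of_natDegree_lt (by omega), hdX] at hd
    have : u.natDegree ≤ q.natDegree := by omega
    nlinarith
  · have := natDegree_add_le u (C (m : ℂ) * X * q)
    rw [hdX, heq] at this
    rw [heq] at hd
    rw [max_self] at this
    nlinarith
  · rw [natDegree_add_eq_left_of_natDegree_lt (by omega)] at hd
    nlinarith

lemma coeff_sub (R : Type*) [CommRing R] (P : R[X]) (m : ℕ) (hP : P.natDegree ≤ m + 1) (a b : R) :
    ((taylor b P).comp (C a * X)).coeff m = (P.coeff m + (m + 1) * P.coeff (m + 1) * b) * a ^ m := by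
  rw [comp_C_mul_X_coeff, taylor_coeff]
  congr 1
  rw [eval_eq_sum_range' (n := 2)]
  · simp [Finset.sum_range_succ, hasseDeriv_coeff, add_comm 1 m]
  · have := natDegree_hasseDeriv_le P m
    omega

lemma coeff_sub_top (R : Type*) [CommRing R] (P : R[X]) (m : ℕ) (hP : P.natDegree ≤ m) (a b : R) :
    ((taylor b P).comp (C a * X)).coeff m = P.coeff m * a ^ m := by
  rw [comp_C_mul_X_coeff, taylor_coeff]
  congr 1
  rw [eval_eq_sum_range' (n := 1)]
  · simp [hasseDeriv_coeff]
  · have := natDegree_hasseDeriv_le P m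
    omega

lemma SF_transc (c : ℕ) (hc : 2 ≤ c) : ∀ (m : ℕ) (P : ℂ[X][X]), P.natDegree = m → P ≠ 0 →
    ¬ ∀ᶠ z in 𝓝 (0 : ℂ), evalEval z (SF c z) P = 0 := by
  intro m
  induction m using Nat.strong_induction_on with
  | _ m ih =>
  intro P hPm hP hz
  have hc0 : (c : ℂ) ≠ 0 := by
    have : c ≠ 0 := by omega
    exact_mod_cast this
  have hlead : P.coeff m ≠ 0 := by
    rw [← hPm]; simpa using hP
  rcases Nat.eq_zero_or_pos m with rfl | hmpos
  · rw [natDegree_eq_zero] at hPm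
    obtain ⟨p, rfl⟩ := hPm
    simp only [evalEval_C] at hz
    simp at hlead
    have h2 : {z : ℂ | p.IsRoot z}.Finite := by
      simpa using Polynomial.finite_setOfPred_isRoot hlead
    exact (infinite_of_mem_nhds (0 : ℂ) hz) h2
  obtain ⟨k, rfl⟩ : ∃ k, m = k + 1 := ⟨m - 1, by omega⟩
  let P1 : ℂ[X][X] := P.map (expand ℂ c : ℂ[X] →+* ℂ[X])
  let P2 : ℂ[X][X] := (taylor (-(X ^ c : ℂ[X])) P1).comp (C (C (c : ℂ)) * X)
  have hP1d : P1.natDegree ≤ k + 1 := by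
    rw [← hPm]; exact natDegree_map_le
  have hP2d : P2.natDegree ≤ k + 1 := by
    refine natDegree_comp_le.trans ?_
    rw [natDegree_taylor]
    calc P1.natDegree * _ ≤ P1.natDegree * 1 := by
          gcongr
          exact (natDegree_C_mul_le _ _).trans natDegree_X_le
      _ ≤ k + 1 := by omega
  have hP2z : ∀ᶠ z in 𝓝 (0 : ℂ), evalEval z (SF c z) P2 = 0 := by
    have ht : Tendsto (fun z : ℂ => z ^ c) (𝓝 0) (𝓝 0) := by
      have : Continuous (fun z : ℂ => z ^ c) := by fun_prop
      have h := this.tendsto 0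
      rwa [zero_pow (by omega)] at h
    filter_upwards [ht.eventually hz, Metric.closedBall_mem_nhds (0 : ℂ) one_pos] with z h1 h2
    rw [SF_eq c hc z (by simpa using h2)] at h1
    rw [← h1]
    simp only [P2, P1, taylor_apply, evalEval, eval_comp, eval_add, eval_mul, eval_X, eval_C]
    rw [eval_map, ← coe_evalRingHom, ← coe_evalRingHom (z ^ c), hom_eval₂, eval, hom_eval₂]
    congr 1
    · ext x <;> simp
    · simp; ring
  let Q : ℂ[X][X] := C (P.coeff (k + 1)) * P2 - C (P2.coeff (k + 1)) * P
  have hQz : ∀ᶠ z in 𝓝 (0 : ℂ), evalEval z (SF c z) Q = 0 := by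
    filter_upwards [hz, hP2z] with z h1 h2
    simp [Q, evalEval_sub, evalEval_mul, h1, h2]
  have hQ0 : Q = 0 := by
    by_contra hQ
    have hd : Q.natDegree < k + 1 := by
      have h1 : Q.natDegree ≤ k + 1 := by
        refine (natDegree_sub_le _ _).trans (max_le ?_ ?_)
        · exact (natDegree_C_mul_le _ _).trans hP2d
        · exact (natDegree_C_mul_le _ _).trans hPm.le
      refine lt_of_le_of_ne h1 fun h2 => ?_
      have h3 : Q.coeff (k + 1) = 0 := by
        simp [Q]; ring
      rw [← h2] at h3
      exact hQ (by simpa using h3)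
    exact ih _ hd Q rfl hQ hQz
  have hk : Q.coeff k = 0 := by rw [hQ0]; simp
  have e1 : P2.coeff (k + 1) = expand ℂ c (P.coeff (k + 1)) * (C (c : ℂ)) ^ (k + 1) := by
    rw [coeff_sub_top _ _ _ hP1d]; simp [P1]
  have e2 : P2.coeff k = (expand ℂ c (P.coeff k) + ((k : ℂ[X]) + 1) * expand ℂ c (P.coeff (k + 1)) * (-(X ^ c))) *
      (C (c : ℂ)) ^ k := by
    rw [coeff_sub _ _ _ hP1d]; simp [P1]
  simp only [Q, Polynomial.coeff_sub, coeff_C_mul, e1, e2] at hk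
  apply no_rat c hc (k + 1) (by omega) (P.coeff k) (P.coeff (k + 1)) hlead
  have hck : (C (c : ℂ)) ^ k ≠ 0 := pow_ne_zero _ (by simpa using hc0)
  apply mul_right_cancel₀ hck
  have e3 : (c : ℂ[X]) = C (c : ℂ) := by simp
  rw [e3]
  push_cast
  linear_combination hk

lemma aux_poly (T : ℚ[X]) (N M : ℕ) (h : M < (N + 1) ^ 2) :
    ∃ a : Fin (N + 1) × Fin (N + 1) → ℤ, a ≠ 0 ∧
      X ^ M ∣ ∑ p, C (a p : ℚ) * X ^ (p.1 : ℕ) * T ^ (p.2 : ℕ) := by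
  let L : (Fin (N + 1) × Fin (N + 1) → ℚ) →ₗ[ℚ] (Fin M → ℚ) :=
    LinearMap.pi fun i => (lcoeff ℚ (i : ℕ)) ∘ₗ
      (Fintype.linearCombination ℚ fun p : Fin (N + 1) × Fin (N + 1) =>
        (X ^ (p.1 : ℕ) * T ^ (p.2 : ℕ) : ℚ[X]))
  have hL : LinearMap.ker L ≠ ⊥ := L.ker_ne_bot_of_finrank_lt (by
    simp; nlinarith)
  obtain ⟨v, hv, hv0⟩ := (Submodule.ne_bot_iff _).1 hL
  obtain ⟨d, hd⟩ := IsLocalization.exist_integer_multiples_of_finite (nonZeroDivisors ℤ) v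
  choose a ha using hd
  have hd0 : ((d : ℤ) : ℚ) ≠ 0 := by
    have := nonZeroDivisors.ne_zero d.2
    exact_mod_cast this
  have ha' : ∀ p, (a p : ℚ) = (d : ℤ) * v p := by
    intro p
    have := ha p
    simpa [zsmul_eq_mul, Algebra.smul_def] using this
  refine ⟨a, ?_, ?_⟩
  · rintro rfl
    apply hv0
    ext p
    have := ha' p
    simp at this
    simp only [Pi.zero_apply]
    tauto
  · have e : ∑ p, C (a p : ℚ) * X ^ (p.1 : ℕ) * T ^ (p.2 : ℕ) = C ((d : ℤ) : ℚ) *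
      (Fintype.linearCombination ℚ (fun p : Fin (N + 1) × Fin (N + 1) =>
        (X ^ (p.1 : ℕ) * T ^ (p.2 : ℕ) : ℚ[X])) v) := by
      rw [Fintype.linearCombination_apply, Finset.mul_sum]
      refine Finset.sum_congr rfl fun p _ => ?_
      rw [ha', C_mul, smul_eq_C_mul]; ring
    rw [e]
    apply Dvd.dvd.mul_left
    rw [X_pow_dvd_iff]
    intro i hi
    have := congrFun (LinearMap.mem_ker.1 hv) ⟨i, hi⟩
    simpa [L] using this

lemma E_bigO (f : ℂ → ℂ) (hf : ContinuousAt f 0) (T : ℚ[X]) (N M : ℕ)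
    (hT : (fun z => f z - aeval z T) =O[𝓝 0] (fun z : ℂ => z ^ M))
    (a : Fin (N + 1) × Fin (N + 1) → ℤ)
    (h : X ^ M ∣ ∑ p, C (a p : ℚ) * X ^ (p.1 : ℕ) * T ^ (p.2 : ℕ)) :
    (fun z => ∑ p, (a p : ℂ) * z ^ (p.1 : ℕ) * f z ^ (p.2 : ℕ)) =O[𝓝 0] (fun z : ℂ => z ^ M) := by
  obtain ⟨W, hW⟩ := h
  have hTc : Continuous (fun z : ℂ => aeval z T) := T.continuous_aeval
  have hWc : Continuous (fun z : ℂ => aeval z W) := W.continuous_aeval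
  let G : ℕ → ℂ → ℂ := fun j z => ∑ i ∈ Finset.range j, f z ^ i * (aeval z T) ^ (j - 1 - i)
  have e : (fun z => ∑ p, (a p : ℂ) * z ^ (p.1 : ℕ) * f z ^ (p.2 : ℕ)) = fun z : ℂ =>
      z ^ M * aeval z W + (f z - aeval z T) * ∑ p, (a p : ℂ) * z ^ (p.1 : ℕ) * G p.2 z := by
    ext z
    have h1 := congrArg (aeval z) hW
    simp only [map_sum, map_mul, map_pow, aeval_X, map_intCast] at h1
    rw [← h1, Finset.mul_sum, ← Finset.sum_add_distrib]
    refine Finset.sum_congr rfl fun p _ => ?_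
    have h2 := (Commute.all (f z) (aeval z T)).geom_sum₂_mul (p.2 : ℕ)
    have h3 : G p.2 z * (f z - aeval z T) = f z ^ (p.2 : ℕ) - (aeval z T) ^ (p.2 : ℕ) := h2
    linear_combination (-(a p : ℂ) * z ^ (p.1 : ℕ)) * h3
  rw [e]
  have hone : ∀ g : ℂ → ℂ, ContinuousAt g 0 → g =O[𝓝 0] (fun _ => (1 : ℂ)) :=
    fun g hg => hg.tendsto.isBigO_one ℂ
  apply Asymptotics.IsBigO.add
  · simpa using (Asymptotics.isBigO_refl (fun z : ℂ => z ^ M) (𝓝 0)).mul (hone _ hWc.continuousAt)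
  · have : ContinuousAt (fun z => ∑ p : Fin (N + 1) × Fin (N + 1),
        (a p : ℂ) * z ^ (p.1 : ℕ) * G p.2 z) 0 := by
      have hTa := hTc.continuousAt (x := 0)
      fun_prop
    simpa using hT.mul (hone _ this)

open NumberField in
lemma liou (K : Type*) [Field K] [NumberField K] (φ : K →+* ℂ) (x : K) (A : ℤ) (hA : A ≠ 0)
    (hAx : IsIntegral ℤ ((A : K) * x)) (N : ℕ) (a : Fin (N + 1) × Fin (N + 1) → ℤ)
    (B t R : ℕ) (hB : 1 ≤ B) (ht : 1 ≤ t) (hR : R ≤ t * B)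
    (hE : ∑ p, (a p : ℂ) * (1 / (B : ℂ)) ^ (p.1 : ℕ) * (t * φ x - R / B) ^ (p.2 : ℕ) ≠ 0) :
    1 ≤ (|(A : ℝ)| ^ N * (B : ℝ) ^ (2 * N) *
      ‖∑ p, (a p : ℂ) * (1 / (B : ℂ)) ^ (p.1 : ℕ) * (t * φ x - R / B) ^ (p.2 : ℕ)‖) *
      (((∑ p, |(a p : ℝ)|) * |(A : ℝ)| ^ N * (house x + 1) ^ N) * (B : ℝ) ^ (2 * N) * (t : ℝ) ^ N) ^
        (Module.finrank ℚ K - 1) := by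
  let θ : K := ∑ p, (A : K) ^ N * (B : K) ^ (2 * N) * ((a p : K) * (1 / (B : K)) ^ (p.1 : ℕ) *
    (t * x - R / B) ^ (p.2 : ℕ))
  have hσ : ∀ σ : K →+* ℂ, σ θ = (A : ℂ) ^ N * (B : ℂ) ^ (2 * N) *
      ∑ p, (a p : ℂ) * (1 / (B : ℂ)) ^ (p.1 : ℕ) * (t * σ x - R / B) ^ (p.2 : ℕ) := by
    intro σ
    simp [θ, Finset.mul_sum]
  have hBK : (B : K) ≠ 0 := by
    have : B ≠ 0 := by omega
    exact_mod_cast this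
  have hθ0 : θ ≠ 0 := by
    intro h0
    have h1 := hσ φ
    rw [h0, map_zero] at h1
    have hA' : (A : ℂ) ≠ 0 := by exact_mod_cast hA
    have hB' : (B : ℂ) ≠ 0 := by
      have : B ≠ 0 := by omega
      exact_mod_cast this
    exact mul_ne_zero (mul_ne_zero (pow_ne_zero _ hA') (pow_ne_zero _ hB')) hE h1.symm
  have hint : IsIntegral ℤ θ := by
    refine IsIntegral.sum _ fun p _ => ?_
    obtain ⟨i, j⟩ := p
    obtain ⟨u, hu⟩ : ∃ u, N = j + u := ⟨N - j, by omega⟩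
    obtain ⟨w, hw⟩ : ∃ w, 2 * N = i + j + w := ⟨2 * N - i - j, by omega⟩
    have e : (A : K) ^ N * (B : K) ^ (2 * N) * ((a (i, j) : K) * (1 / (B : K)) ^ (i : ℕ) *
        (t * x - R / B) ^ (j : ℕ)) = ((a (i, j) * A ^ u * B ^ w : ℤ) : K) *
        (((t * B : ℕ) : K) * ((A : K) * x) - ((A * R : ℤ) : K)) ^ (j : ℕ) := by
      have e1 : ((t * B : ℕ) : K) * ((A : K) * x) - ((A * R : ℤ) : K) =
          (A : K) * B * (t * x - R / B) := by
        push_cast; field_simp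
      rw [e1, mul_pow, mul_pow, hw, pow_add, pow_add, one_div, inv_pow]
      have hAN : (A : K) ^ N = A ^ (j : ℕ) * A ^ u := by rw [← pow_add, ← hu]
      rw [hAN]
      push_cast
      field_simp
    rw [e]
    have hi : ∀ m : ℤ, IsIntegral ℤ (m : K) := fun m => isIntegral_algebraMap (R := ℤ) (x := m)
    have hn : ∀ m : ℕ, IsIntegral ℤ (m : K) := fun m => by simpa using hi m
    exact (hi _).mul ((((hn _).mul hAx).sub (hi _)).pow _)
  have hnorm : (1 : ℝ) ≤ ‖Algebra.norm ℚ θ‖ := by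
    have h1 : IsIntegral ℤ (Algebra.norm ℚ θ) := Algebra.isIntegral_norm ℚ hint
    obtain ⟨m, hm⟩ := IsIntegrallyClosed.isIntegral_iff.1 h1
    have h2 : Algebra.norm ℚ θ ≠ 0 := Algebra.norm_ne_zero_iff.2 hθ0
    rw [← hm] at h2 ⊢
    have h3 : m ≠ 0 := by rintro rfl; simp at h2
    have := Int.one_le_abs h3
    simp only [algebraMap_int_eq, eq_intCast]
    rw [← Rat.norm_cast_real]
    simp only [Rat.cast_intCast, Real.norm_eq_abs]
    exact_mod_cast this
  have hh0 : 0 ≤ house x := norm_nonneg _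
  have ht1 : (1 : ℝ) ≤ t := by exact_mod_cast ht
  have hB1 : (1 : ℝ) ≤ B := by exact_mod_cast hB
  have hhouse : house θ ≤ ((∑ p, |(a p : ℝ)|) * |(A : ℝ)| ^ N * (house x + 1) ^ N) *
      (B : ℝ) ^ (2 * N) * (t : ℝ) ^ N := by
    rw [house_eq_sup']
    have : ∀ σ : K →+* ℂ, ‖σ θ‖ ≤ ((∑ p, |(a p : ℝ)|) * |(A : ℝ)| ^ N * (house x + 1) ^ N) *
      (B : ℝ) ^ (2 * N) * (t : ℝ) ^ N := by
      intro σ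
      rw [hσ, norm_mul, norm_mul, norm_pow, norm_pow, Complex.norm_intCast, Complex.norm_natCast]
      have h1 : ‖∑ p, (a p : ℂ) * (1 / (B : ℂ)) ^ (p.1 : ℕ) * (t * σ x - R / B) ^ (p.2 : ℕ)‖ ≤
          ∑ p, |(a p : ℝ)| * ((t : ℝ) * (house x + 1)) ^ N := by
        refine (norm_sum_le _ _).trans (Finset.sum_le_sum fun p _ => ?_)
        rw [norm_mul, norm_mul, Complex.norm_intCast, mul_assoc]
        gcongr
        rw [norm_pow, norm_pow, norm_div, norm_one, Complex.norm_natCast]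
        have h2 : (1 / (B : ℝ)) ^ (p.1 : ℕ) ≤ 1 :=
          pow_le_one₀ (by positivity) (by rw [div_le_one (by linarith)]; exact hB1)
        have h3 : ‖(t : ℂ) * σ x - R / B‖ ≤ t * (house x + 1) := by
          refine (norm_sub_le _ _).trans ?_
          rw [norm_mul, norm_div, Complex.norm_natCast, Complex.norm_natCast, Complex.norm_natCast,
            mul_add, mul_one]
          have h4 := norm_embedding_le_house x σ
          have h5 : (R : ℝ) / B ≤ t := by
            rw [div_le_iff₀ (by linarith)]; exact_mod_cast hR
          gcongr
        have h6 : (1 : ℝ) ≤ t * (house x + 1) := by nlinarith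
        calc _ ≤ 1 * ((t : ℝ) * (house x + 1)) ^ (p.2 : ℕ) := by gcongr
          _ ≤ _ := by
            rw [one_mul]
            exact pow_le_pow_right₀ h6 (by omega)
      calc _ ≤ |(A : ℝ)| ^ N * (B : ℝ) ^ (2 * N) *
            ∑ p, |(a p : ℝ)| * ((t : ℝ) * (house x + 1)) ^ N := by gcongr
        _ = _ := by rw [← Finset.sum_mul, mul_pow]; ring
    have hS : 0 ≤ ((∑ p, |(a p : ℝ)|) * |(A : ℝ)| ^ N * (house x + 1) ^ N) *
      (B : ℝ) ^ (2 * N) * (t : ℝ) ^ N := by positivity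
    rw [← Real.coe_toNNReal _ hS, NNReal.coe_le_coe]
    apply Finset.sup'_le
    intro σ _
    rw [← NNReal.coe_le_coe, Real.coe_toNNReal _ hS]
    exact this σ
  refine hnorm.trans ((norm_norm_le_norm_mul_house_pow θ φ).trans ?_)
  have h0 : 0 ≤ house θ := norm_nonneg _
  rw [hσ φ, norm_mul, norm_mul, norm_pow, norm_pow, Complex.norm_intCast, Complex.norm_natCast]
  gcongr

lemma SF_nonvanish (c : ℕ) (hc : 2 ≤ c) (N : ℕ) (a : Fin (N + 1) × Fin (N + 1) → ℤ) (ha : a ≠ 0) :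
    ∀ᶠ z in 𝓝[≠] (0 : ℂ), ∑ p, (a p : ℂ) * z ^ (p.1 : ℕ) * SF c z ^ (p.2 : ℕ) ≠ 0 := by
  have hF := SF_analytic c hc
  have hA : AnalyticAt ℂ
      (fun z => ∑ p, (a p : ℂ) * z ^ (p.1 : ℕ) * SF c z ^ (p.2 : ℕ)) 0 := by
    fun_prop
  refine hA.eventually_eq_zero_or_eventually_ne_zero.resolve_left fun h => ?_
  let P : ℂ[X][X] := ∑ p, monomial (p.2 : ℕ) (monomial (p.1 : ℕ) (a p : ℂ))
  have hP : P ≠ 0 := by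
    obtain ⟨q, hq⟩ := Function.ne_iff.1 ha
    intro h0
    have h1 : (P.coeff q.2).coeff q.1 = (a q : ℂ) := by
      simp only [P, finsetSum_coeff, coeff_monomial]
      rw [Finset.sum_eq_single q]
      · simp
      · rintro ⟨i, j⟩ _ hne
        by_cases hj : (j : ℕ) = q.2
        · rw [if_pos hj, coeff_monomial, if_neg]
          intro hi
          exact hne (Prod.ext (Fin.ext hi) (Fin.ext hj))
        · rw [if_neg hj, coeff_zero]
      · simp
    rw [h0] at h1
    simp at h1
    exact hq (by simpa using h1.symm)
  refine SF_transc c hc _ P rfl hP ?_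
  filter_upwards [h] with z hz
  rw [← hz]
  simp only [P, evalEval, eval_finsetSum, eval_monomial, eval_mul, eval_pow, eval_C]

lemma SF_orbit (b c : ℕ) (hb : 2 ≤ b) (hc : 2 ≤ c) (k : ℕ) : ∃ R : ℕ,
    SF c (1 / ((b ^ c ^ k : ℕ) : ℂ)) = ((c ^ k : ℕ) : ℂ) * SF c (1 / (b : ℂ)) -
      (R : ℂ) / ((b ^ c ^ k : ℕ) : ℂ) ∧ R + b ^ c ^ k ≤ c ^ k * b ^ c ^ k := by
  have hb0 : (b : ℂ) ≠ 0 := by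
    have : b ≠ 0 := by omega
    exact_mod_cast this
  induction k with
  | zero => exact ⟨0, by simp, by simp⟩
  | succ k ih =>
    obtain ⟨R, h1, h2⟩ := ih
    obtain ⟨e, rfl⟩ : ∃ e, c = e + 1 := ⟨c - 1, by omega⟩
    have hBe : b ^ (e + 1) ^ (k + 1) = b ^ (e + 1) ^ k * (b ^ (e + 1) ^ k) ^ e := by
      rw [pow_succ (e + 1) k, pow_mul, pow_succ' _ e]
    generalize hBdef : b ^ (e + 1) ^ k = B at *
    have hB1 : 1 ≤ B := by rw [← hBdef]; exact Nat.one_le_pow _ _ (by omega)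
    have hB0 : (B : ℂ) ≠ 0 := by
      have : B ≠ 0 := by omega
      exact_mod_cast this
    refine ⟨(e + 1) * R * B ^ e + 1, ?_, ?_⟩
    · have hn : ‖1 / (B : ℂ)‖ ≤ 1 := by
        rw [norm_div, norm_one, Complex.norm_natCast]
        have : (1 : ℝ) ≤ B := by exact_mod_cast hB1
        rw [div_le_one (by linarith)]; exact this
      have h3 := SF_eq (e + 1) hc (1 / (B : ℂ)) hn
      have h4 : (1 / (B : ℂ)) ^ (e + 1) = 1 / ((b ^ (e + 1) ^ (k + 1) : ℕ) : ℂ) := by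
        rw [hBe]; push_cast; rw [div_pow, one_pow, pow_succ']
      rw [h4, h1] at h3
      rw [h3, hBe]
      push_cast
      field_simp
      ring
    · rw [hBe]
      have hBe1 : 1 ≤ B ^ e := Nat.one_le_pow _ _ hB1
      have h5 : (e + 1) * B ^ e * (R + B) ≤ (e + 1) * B ^ e * ((e + 1) ^ k * B) :=
        Nat.mul_le_mul_left _ h2
      have he : 1 ≤ e := by omega
      have h6 : 1 ≤ e * (B * B ^ e) :=
        Nat.mul_pos (by omega) (Nat.mul_pos (by omega) (by omega))
      rw [pow_succ (e + 1) k]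
      nlinarith

lemma SF_stoneham (b c : ℕ) : ((stoneham b c : ℝ) : ℂ) = SF c (1 / (b : ℂ)) := by
  unfold stoneham SF
  rw [Complex.ofReal_tsum]
  congr 1
  ext n
  push_cast
  rw [div_pow, one_pow, div_div, mul_comm]

theorem stmt18 (b c : ℕ) (hb : 2 ≤ b) (hc : 2 ≤ c) (hbc : Nat.Coprime b c) :
    Transcendental ℚ (stoneham b c) := by
  intro halg
  have halg' : IsAlgebraic ℚ (SF c (1 / (b : ℂ))) := by
    rw [← SF_stoneham]
    exact halg.algebraMap (A := ℂ)
  set α : ℂ := SF c (1 / (b : ℂ)) with hα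
  let K := IntermediateField.adjoin ℚ {α}
  have : FiniteDimensional ℚ K := IntermediateField.adjoin.finiteDimensional halg'.isIntegral
  have : NumberField K := ⟨⟩
  let φ : K →+* ℂ := algebraMap K ℂ
  let x : K := IntermediateField.AdjoinSimple.gen ℚ α
  have hφ : φ x = α := rfl
  obtain ⟨A, hA, hAx⟩ : ∃ A : ℤ, A ≠ 0 ∧ IsIntegral ℤ ((A : K) * x) := by
    have h1 : IsAlgebraic ℤ x :=
      (IsFractionRing.isAlgebraic_iff ℤ ℚ K).2 (Algebra.IsAlgebraic.isAlgebraic x)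
    obtain ⟨A, hA, h2⟩ := h1.exists_integral_multiple
    exact ⟨A, hA, by simpa [Algebra.smul_def] using h2⟩
  set d := Module.finrank ℚ K with hd
  have hdpos : 0 < d := Module.finrank_pos
  set N := 2 * d with hN
  set M := 2 * N * d + 1 with hM
  obtain ⟨T, hT⟩ := SF_trunc c hc M
  obtain ⟨a, ha, hdvd⟩ := aux_poly T N M (by rw [hM, hN]; nlinarith)
  have hTO : (fun z => SF c z - aeval z T) =O[𝓝 0] (fun z : ℂ => z ^ M) := by
    apply Asymptotics.IsBigO.of_bound 1
    filter_upwards [Metric.closedBall_mem_nhds (0 : ℂ) one_pos] with z hz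
    rw [norm_pow, one_mul]
    exact hT z (by simpa using hz)
  have hE := E_bigO (SF c) (SF_analytic c hc).continuousAt T N M hTO a hdvd
  obtain ⟨C₁, hC₁⟩ := hE.bound
  have hnv := SF_nonvanish c hc N a ha
  -- the sequence
  have hct : Tendsto (fun k : ℕ => c ^ k) atTop atTop := tendsto_pow_atTop_atTop_of_one_lt (by omega)
  have hB1 : ∀ k, 1 ≤ b ^ c ^ k := fun k => Nat.one_le_pow _ _ (by omega)
  have hz0 : Tendsto (fun k : ℕ => (1 : ℂ) / ((b ^ c ^ k : ℕ) : ℂ)) atTop (𝓝 0) := by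
    have h1 : Tendsto (fun k : ℕ => b ^ c ^ k) atTop atTop :=
      (tendsto_pow_atTop_atTop_of_one_lt (by omega)).comp hct
    exact (tendsto_one_div_atTop_nhds_zero_nat (𝕜 := ℂ)).comp h1
  have hz1 : Tendsto (fun k : ℕ => (1 : ℂ) / ((b ^ c ^ k : ℕ) : ℂ)) atTop (𝓝[≠] 0) := by
    refine tendsto_nhdsWithin_iff.2 ⟨hz0, Eventually.of_forall fun k => ?_⟩
    have : ((b ^ c ^ k : ℕ) : ℂ) ≠ 0 := by
      have := hB1 k
      exact_mod_cast (by omega : b ^ c ^ k ≠ 0)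
    simpa using this
  set S : ℝ := (∑ p, |(a p : ℝ)|) * |(A : ℝ)| ^ N * (NumberField.house x + 1) ^ N with hS
  have hS0 : 0 ≤ S := by
    have : 0 ≤ NumberField.house x := norm_nonneg _
    positivity
  have hmain : ∀ᶠ k : ℕ in atTop, (1 : ℝ) ≤ |(A : ℝ)| ^ N * C₁ * S ^ (d - 1) *
      (((c ^ k : ℕ) : ℝ) ^ (N * (d - 1)) / (2 : ℝ) ^ (c ^ k)) := by
    filter_upwards [hz0.eventually hC₁, hz1.eventually hnv] with k h1 h2
    obtain ⟨R, hR1, hR2⟩ := SF_orbit b c hb hc k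
    have hBk := hB1 k
    have hBge : (2 : ℝ) ^ (c ^ k) ≤ ((b ^ c ^ k : ℕ) : ℝ) := by
      push_cast
      have : (2 : ℝ) ≤ b := by exact_mod_cast hb
      gcongr
    generalize b ^ c ^ k = B at *
    have htk : 1 ≤ c ^ k := Nat.one_le_pow _ _ (by omega)
    generalize c ^ k = t at *
    have hBr : (1 : ℝ) ≤ B := by exact_mod_cast hBk
    rw [hR1, ← hα, ← hφ] at h1 h2
    have h3 := liou K φ x A hA hAx N a B t R hBk htk (by omega) h2
    refine h3.trans ?_
    have hn : ‖(1 / (B : ℂ)) ^ M‖ = 1 / (B : ℝ) ^ M := by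
      rw [norm_pow, norm_div, norm_one, Complex.norm_natCast, div_pow, one_pow]
    rw [hn] at h1
    have hC0 : 0 ≤ C₁ := by
      have h4 := (norm_nonneg _).trans h1
      exact nonneg_of_mul_nonneg_left h4 (by positivity)
    rw [← hS, ← hd]
    calc _ ≤ (|(A : ℝ)| ^ N * (B : ℝ) ^ (2 * N) * (C₁ * (1 / (B : ℝ) ^ M))) *
          (S * (B : ℝ) ^ (2 * N) * (t : ℝ) ^ N) ^ (d - 1) := by gcongr
      _ = |(A : ℝ)| ^ N * C₁ * S ^ (d - 1) * ((t : ℝ) ^ (N * (d - 1)) / (B : ℝ)) := by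
        have hMe : (B : ℝ) ^ M = (B : ℝ) ^ (2 * N) * ((B : ℝ) ^ (2 * N)) ^ (d - 1) * B := by
          rw [← pow_mul, ← pow_add, ← pow_succ, hM]
          congr 1
          obtain ⟨e, he⟩ : ∃ e, d = e + 1 := ⟨d - 1, by omega⟩
          rw [he]; simp; ring
        rw [hMe, mul_pow, mul_pow, pow_mul (t : ℝ) N (d - 1)]
        have hBne : (B : ℝ) ≠ 0 := by linarith
        have hune : (B : ℝ) ^ (2 * N) ≠ 0 := pow_ne_zero _ hBne
        generalize (B : ℝ) ^ (2 * N) = u at *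
        generalize (t : ℝ) ^ N = v at *
        field_simp
      _ ≤ _ := by gcongr
  have hlim : Tendsto (fun k : ℕ => |(A : ℝ)| ^ N * C₁ * S ^ (d - 1) *
      (((c ^ k : ℕ) : ℝ) ^ (N * (d - 1)) / (2 : ℝ) ^ (c ^ k))) atTop (𝓝 0) := by
    have h1 := (tendsto_pow_const_div_const_pow_of_one_lt (N * (d - 1))
      (show (1 : ℝ) < 2 by norm_num)).comp hct
    have h2 := h1.const_mul (|(A : ℝ)| ^ N * C₁ * S ^ (d - 1))
    rw [mul_zero] at h2
    exact h2
  have := ge_of_tendsto hlim hmain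
  linarith
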